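/- Let Γ be a Jordan curve in ℝ² and let T and T' be locally finite tilings of ℝ² such that R_{T'} > R_T and K_{T'} < L(Γ,T') ≤ L(Γ,T). Then L(Γ,T') ≤ (2 K_{T'} + 1) · (R_T / R_{T'}) · L(Γ,T). -/

import Mathlib

/-!
Write `R = R_T`, `R' = R_{T'}`, `K' = K_{T'}`, `L = L(Γ,T)`, `L' = L(Γ,T')`.

* Comparing areas, at most `K'` tiles of `T'` meet a closed ball of radius `2R'`
  (`card_le_tK`): those tiles lie in the ball of radius `4R'`, and each contains a disc of any
  radius below `r_{T'}`.
* Pick a point of `Γ` in each of the `L'` tiles of `T'` meeting `Γ`, and among these points a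
  maximal family `Q` with pairwise distances `> 2R'` (`exists_separated_net`). The balls of
  radius `2R'` around `Q` meet all the `L'` tiles, so `L' ≤ |Q| K'`.
* Let `q ∈ Q`. As `L' > K'`, the curve leaves the ball of radius `2R'` around `q`. By
  connectedness the distance to `q` takes on `Γ` all values in `[0, R' - R]`, and a tile of `T`
  accounts for a set of values of length at most `2R`; hence at least `(R' - R) / (2R)` tiles of
  `T` meet `Γ` inside the ball of radius `R' - R` around `q` (`radial_count`).
* No tile of `T` meets two of these smaller balls, their centres being more than
  `2R' = 2(R' - R) + 2R` apart. Hence `|Q| (R' - R) ≤ 2 R L`.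

So `L' (R' - R) ≤ 2 K' R L`. Adding `L' R ≤ L R` gives `L' R' ≤ (2K' + 1) R L`.
-/

noncomputable section

/-- The Euclidean plane. -/
abbrev Plane : Type := EuclideanSpace ℝ (Fin 2)

/-- The closed unit ball of the plane. -/
def unitDisk : Set Plane := Metric.closedBall 0 1

/-- A tile is a closed subset of the plane homeomorphic to the closed unit ball. -/
def IsTile (t : Set Plane) : Prop := IsClosed t ∧ Nonempty (t ≃ₜ unitDisk)

/-- A tiling of the plane: a countable collection of tiles covering the plane,
with pairwise disjoint interiors. -/
structure Tiling where
  tiles : Set (Set Plane)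
  countable : tiles.Countable
  isTile : ∀ t ∈ tiles, IsTile t
  covers : ⋃₀ tiles = Set.univ
  disjInt : tiles.Pairwise fun t s => interior t ∩ interior s = ∅

/-- `rmin U` = sup of radii of closed balls contained in `U`. -/
def rmin (U : Set Plane) : ℝ :=
  sSup {r : ℝ | 0 < r ∧ ∃ x : Plane, Metric.closedBall x r ⊆ U}

/-- `r_T` : the infimum of `rmin` over the tiles. -/
def tilesr (C : Set (Set Plane)) : ℝ := sInf (rmin '' C)

/-- `R_T` : the supremum of the diameters of tiles, divided by 2. -/
def tilesR (C : Set (Set Plane)) : ℝ := sSup (Metric.diam '' C) / 2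

/-- A tiling is locally finite if `R_T < ∞` (i.e. diameters are bounded above)
and `r_T > 0`. -/
def LocFinite (C : Set (Set Plane)) : Prop := BddAbove (Metric.diam '' C) ∧ 0 < tilesr C

/-- `K_T = ⌊16 R_T² r_T⁻²⌋`. -/
def tK (C : Set (Set Plane)) : ℕ := ⌊16 * tilesR C ^ 2 / tilesr C ^ 2⌋₊

/-- `L(A, T)` : the number of tiles of `T` that intersect `A`. -/
def tL (A : Set Plane) (C : Set (Set Plane)) : ℕ := {t ∈ C | (t ∩ A).Nonempty}.ncard

/-- A simple curve: the image of a continuous injective map from `[0,1]`. -/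
def IsSimpleCurve (γ : Set Plane) : Prop :=
  ∃ f : Set.Icc (0:ℝ) 1 → Plane, Continuous f ∧ Function.Injective f ∧ γ = Set.range f

/-- A Jordan curve: the image of a continuous injective map from the circle `S¹`. -/
def IsJordanCurve (Γ : Set Plane) : Prop :=
  ∃ f : Metric.sphere (0 : Plane) 1 → Plane,
    Continuous f ∧ Function.Injective f ∧ Γ = Set.range f

open MeasureTheory

lemma IsTile.isCompact {t : Set Plane} (ht : IsTile t) : IsCompact t := by
  obtain ⟨-, ⟨e⟩⟩ := ht
  have : CompactSpace unitDisk := isCompact_iff_compactSpace.mp (isCompact_closedBall _ _)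
  have : CompactSpace t := e.symm.compactSpace
  exact isCompact_iff_compactSpace.mpr this

lemma tilesR_nonneg (C : Set (Set Plane)) : 0 ≤ tilesR C := by
  apply div_nonneg _ zero_le_two
  apply Real.sSup_nonneg
  rintro _ ⟨t, -, rfl⟩
  exact Metric.diam_nonneg

lemma diam_le_tilesR {C : Set (Set Plane)} (hC : LocFinite C) {t : Set Plane} (ht : t ∈ C) :
    Metric.diam t ≤ 2 * tilesR C := by
  have := le_csSup hC.1 (Set.mem_image_of_mem Metric.diam ht)
  unfold tilesR
  linarith

lemma Tiling.dist_le (T : Tiling) (hT : LocFinite T.tiles) {t : Set Plane} (ht : t ∈ T.tiles)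
    {x y : Plane} (hx : x ∈ t) (hy : y ∈ t) : dist x y ≤ 2 * tilesR T.tiles :=
  (Metric.dist_le_diam_of_mem (T.isTile t ht).isCompact.isBounded hx hy).trans
    (diam_le_tilesR hT ht)

lemma exists_ball_subset {C : Set (Set Plane)} {t : Set Plane} (ht : t ∈ C) {ρ : ℝ}
    (hρ : 0 < ρ) (hρC : ρ < tilesr C) : ∃ c : Plane, Metric.closedBall c ρ ⊆ t := by
  have hbdd : BddBelow (rmin '' C) := by
    refine ⟨0, ?_⟩
    rintro _ ⟨s, -, rfl⟩
    exact Real.sSup_nonneg fun r hr => hr.1.le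
  have h1 : ρ < rmin t := hρC.trans_le (csInf_le hbdd (Set.mem_image_of_mem rmin ht))
  have hne : {r : ℝ | 0 < r ∧ ∃ x : Plane, Metric.closedBall x r ⊆ t}.Nonempty := by
    by_contra h
    rw [Set.not_nonempty_iff_eq_empty] at h
    rw [rmin, h, Real.sSup_empty] at h1
    linarith
  obtain ⟨r, ⟨-, c, hc⟩, hr⟩ := exists_lt_of_lt_csSup hne h1
  exact ⟨c, (Metric.closedBall_subset_closedBall hr.le).trans hc⟩

/-- Area comparison between the discs of radius `ρ < r_T` inside the tiles meeting a ball of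
radius `2 R_T`, and the concentric ball of radius `4 R_T`. -/
lemma card_mul_sq_le (T : Tiling) (hT : LocFinite T.tiles) (x : Plane)
    (F : Finset (Set Plane)) (hF : ∀ t ∈ F, t ∈ T.tiles)
    (hx : ∀ t ∈ F, (t ∩ Metric.closedBall x (2 * tilesR T.tiles)).Nonempty)
    {ρ : ℝ} (hρ : 0 < ρ) (hρT : ρ < tilesr T.tiles) :
    (F.card : ℝ) * ρ ^ 2 ≤ 16 * tilesR T.tiles ^ 2 := by
  classical
  have hR := tilesR_nonneg T.tiles
  have hex : ∀ t : Set Plane, ∃ c : Plane, t ∈ F → Metric.closedBall c ρ ⊆ t := by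
    intro t
    by_cases h : t ∈ F
    · obtain ⟨c, hc⟩ := exists_ball_subset (hF t h) hρ hρT
      exact ⟨c, fun _ => hc⟩
    · exact ⟨0, fun h' => absurd h' h⟩
  choose c hc using hex
  have hdisj : (F : Set (Set Plane)).PairwiseDisjoint fun t => Metric.ball (c t) ρ := by
    intro t ht s hs hts
    have hint : ∀ u ∈ F, Metric.ball (c u) ρ ⊆ interior u := fun u hu =>
      interior_maximal (Metric.ball_subset_closedBall.trans (hc u hu)) Metric.isOpen_ball
    have h := T.disjInt (hF t ht) (hF s hs) hts
    exact (Set.disjoint_iff_inter_eq_empty.mpr h).mono (hint t ht) (hint s hs)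
  have hsub : (⋃ t ∈ F, Metric.ball (c t) ρ) ⊆
      Metric.closedBall x (4 * tilesR T.tiles) := by
    intro y hy
    simp only [Set.mem_iUnion] at hy
    obtain ⟨t, ht, hy⟩ := hy
    have hyt := hc t ht (Metric.ball_subset_closedBall hy)
    obtain ⟨z, hzt, hz⟩ := hx t ht
    have h1 := T.dist_le hT (hF t ht) hyt hzt
    have h2 := Metric.mem_closedBall.mp hz
    have h3 := dist_triangle y z x
    exact Metric.mem_closedBall.mpr (by linarith)
  have hvol := measure_mono (μ := (volume : Measure Plane)) hsub
  rw [measure_biUnion_finset hdisj fun t _ => measurableSet_ball] at hvol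
  simp only [EuclideanSpace.volume_ball_fin_two, EuclideanSpace.volume_closedBall_fin_two,
    Finset.sum_const, nsmul_eq_mul] at hvol
  have hpi : (0 : ℝ) < Real.pi := Real.pi_pos
  have h := ENNReal.toReal_mono (by finiteness) hvol
  simp only [ENNReal.toReal_mul, ENNReal.toReal_pow, ENNReal.toReal_natCast,
    ENNReal.toReal_ofReal hρ.le, ENNReal.toReal_ofReal (by positivity : 0 ≤ 4 * tilesR T.tiles),
    ENNReal.toReal_ofReal hpi.le] at h
  refine le_of_mul_le_mul_right ?_ hpi
  linarith

/-- At most `K_T` tiles meet a given closed ball of radius `2 R_T`. -/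
lemma card_le_tK (T : Tiling) (hT : LocFinite T.tiles) (x : Plane)
    (F : Finset (Set Plane)) (hF : ∀ t ∈ F, t ∈ T.tiles)
    (hx : ∀ t ∈ F, (t ∩ Metric.closedBall x (2 * tilesR T.tiles)).Nonempty) :
    F.card ≤ tK T.tiles := by
  have hr := hT.2
  apply Nat.le_floor
  rw [le_div_iff₀ (by positivity)]
  -- let `ρ` tend to `r_T` from the left
  have hlim : Filter.Tendsto (fun ρ : ℝ => (F.card : ℝ) * ρ ^ 2)
      (nhdsWithin (tilesr T.tiles) (Set.Iio (tilesr T.tiles)))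
      (nhds ((F.card : ℝ) * tilesr T.tiles ^ 2)) :=
    (Continuous.tendsto (by fun_prop) _).mono_left nhdsWithin_le_nhds
  refine le_of_tendsto hlim ?_
  filter_upwards [Ioo_mem_nhdsLT hr] with ρ hρ
  exact card_mul_sq_le T hT x F hF hx hρ.1 hρ.2

/-- A finite set contains a `d`-separated subset that is also a `d`-net. -/
lemma exists_separated_net (d : ℝ) (hd : 0 ≤ d) (P : Finset Plane) :
    ∃ Q ⊆ P, (∀ a ∈ Q, ∀ b ∈ Q, a ≠ b → d < dist a b) ∧ ∀ p ∈ P, ∃ q ∈ Q, dist p q ≤ d := by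
  classical
  induction P using Finset.induction_on with
  | empty => exact ⟨∅, by simp⟩
  | insert a P _ ih =>
    obtain ⟨Q, hQP, hsep, hnet⟩ := ih
    by_cases h : ∃ q ∈ Q, dist a q ≤ d
    · refine ⟨Q, hQP.trans (Finset.subset_insert _ _), hsep, ?_⟩
      intro p hp
      rcases Finset.mem_insert.mp hp with rfl | hp
      · exact h
      · exact hnet p hp
    · push Not at h
      refine ⟨insert a Q, Finset.insert_subset_insert _ hQP, ?_, ?_⟩
      · intro x hx y hy hxy
        rcases Finset.mem_insert.mp hx with hxa | hx <;>
          rcases Finset.mem_insert.mp hy with hya | hy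
        · exact absurd (hxa.trans hya.symm) hxy
        · rw [hxa]; exact h y hy
        · rw [hya, dist_comm]; exact h x hx
        · exact hsep x hx y hy hxy
      · intro p hp
        rcases Finset.mem_insert.mp hp with rfl | hp
        · exact ⟨p, Finset.mem_insert_self _ _, by simpa using hd⟩
        · obtain ⟨q, hq, hpq⟩ := hnet p hp
          exact ⟨q, Finset.mem_insert_of_mem hq, hpq⟩

lemma IsJordanCurve.isPreconnected {Γ : Set Plane} (hΓ : IsJordanCurve Γ) :
    IsPreconnected Γ := by
  obtain ⟨f, hf, -, rfl⟩ := hΓ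
  have hrank : 1 < Module.rank ℝ Plane := by
    rw [rank_eq_card_basis (EuclideanSpace.basisFun (Fin 2) ℝ).toBasis]
    simp
  have : PreconnectedSpace (Metric.sphere (0 : Plane) 1) :=
    Subtype.preconnectedSpace (isPreconnected_sphere hrank 0 1)
  exact isPreconnected_range hf

/-- If a connected set goes from `q` to distance at least `s`, then finitely many tiles covering
its part within distance `s` of `q` number at least `s / (2 R_T)`: their images under the
distance to `q` cover `[0, s]` and have length at most `2 R_T` each. -/
lemma radial_count (T : Tiling) (hT : LocFinite T.tiles) {Γ : Set Plane}
    (hΓ : IsPreconnected Γ) {q z : Plane} (hq : q ∈ Γ) (hz : z ∈ Γ) {s : ℝ} (hs : s ≤ dist z q)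
    (F : Finset (Set Plane)) (hF : ∀ t ∈ F, t ∈ T.tiles)
    (hcov : ∀ y ∈ Γ, dist y q ≤ s → ∃ t ∈ F, y ∈ t) :
    s ≤ F.card * (2 * tilesR T.tiles) := by
  have hR := tilesR_nonneg T.tiles
  have hsub : Set.Icc 0 s ⊆ ⋃ t ∈ F, (fun y => dist y q) '' t := by
    intro v hv
    have hiv := hΓ.intermediate_value hq hz
      (f := fun y => dist y q) (by fun_prop)
    obtain ⟨y, hy, hyv⟩ := hiv ⟨by simpa using hv.1, hv.2.trans hs⟩
    obtain ⟨t, ht, hyt⟩ := hcov y hy (hyv.le.trans hv.2)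
    simp only [Set.mem_iUnion]
    exact ⟨t, ht, y, hyt, hyv⟩
  have hone : ∀ t ∈ F, volume ((fun y => dist y q) '' t) ≤
      ENNReal.ofReal (2 * tilesR T.tiles) := by
    intro t ht
    refine (Real.volume_le_diam _).trans (Metric.ediam_le ?_)
    rintro _ ⟨a, ha, rfl⟩ _ ⟨b, hb, rfl⟩
    rw [edist_dist]
    apply ENNReal.ofReal_le_ofReal
    exact (dist_dist_dist_le_left a b q).trans (T.dist_le hT (hF t ht) ha hb)
  have h : ENNReal.ofReal s ≤ ENNReal.ofReal (F.card * (2 * tilesR T.tiles)) := by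
    calc ENNReal.ofReal s = volume (Set.Icc 0 s) := by simp
      _ ≤ volume (⋃ t ∈ F, (fun y => dist y q) '' t) := measure_mono hsub
      _ ≤ ∑ t ∈ F, volume ((fun y => dist y q) '' t) := measure_biUnion_finset_le _ _
      _ ≤ ∑ _t ∈ F, ENNReal.ofReal (2 * tilesR T.tiles) := Finset.sum_le_sum hone
      _ = ENNReal.ofReal (F.card * (2 * tilesR T.tiles)) := by
        rw [Finset.sum_const, nsmul_eq_mul, ENNReal.ofReal_mul (Nat.cast_nonneg F.card),
          ENNReal.ofReal_natCast]
  exact (ENNReal.ofReal_le_ofReal_iff (by positivity)).mp h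

/-- for a Jordan curve `Γ` and locally finite tilings `T, T'` with
`R_{T'} > R_T` and `K_{T'} < L(Γ,T') ≤ L(Γ,T)`, one has
`L(Γ,T') ≤ (2 K_{T'} + 1) (R_T/R_{T'}) L(Γ,T)`. -/
theorem stmt_3 (Γ : Set Plane) (hΓ : IsJordanCurve Γ) (T T' : Tiling)
    (hT : LocFinite T.tiles) (hT' : LocFinite T'.tiles)
    (hR : tilesR T.tiles < tilesR T'.tiles)
    (hK : tK T'.tiles < tL Γ T'.tiles)
    (hL : tL Γ T'.tiles ≤ tL Γ T.tiles) :
    (tL Γ T'.tiles : ℝ) ≤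
      (2 * (tK T'.tiles : ℝ) + 1) * (tilesR T.tiles / tilesR T'.tiles) *
        (tL Γ T.tiles : ℝ) := by
  classical
  have hR0 := tilesR_nonneg T.tiles
  set R := tilesR T.tiles
  set R' := tilesR T'.tiles
  have hR'0 : 0 < R' := hR0.trans_lt hR
  -- `ncard` vanishes on infinite sets, so the two families of tiles meeting `Γ` are finite.
  have hfin' : {t ∈ T'.tiles | (t ∩ Γ).Nonempty}.Finite :=
    Set.finite_of_ncard_pos (show 0 < tL Γ T'.tiles by omega)
  have hfin : {t ∈ T.tiles | (t ∩ Γ).Nonempty}.Finite :=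
    Set.finite_of_ncard_pos (show 0 < tL Γ T.tiles by omega)
  obtain ⟨S', hS'⟩ := hfin'.exists_finset
  obtain ⟨S, hS⟩ := hfin.exists_finset
  have hLS' : tL Γ T'.tiles = S'.card := by
    rw [tL, ← Set.ncard_coe_finset]
    congr 1; ext t; exact (hS' t).symm
  have hLS : tL Γ T.tiles = S.card := by
    rw [tL, ← Set.ncard_coe_finset]
    congr 1; ext t; exact (hS t).symm
  have hex : ∀ t : Set Plane, ∃ p : Plane, t ∈ S' → p ∈ t ∩ Γ := by
    intro t
    by_cases h : t ∈ S'
    · obtain ⟨p, hp⟩ := ((hS' t).mp h).2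
      exact ⟨p, fun _ => hp⟩
    · exact ⟨0, fun h' => absurd h' h⟩
  choose p hp using hex
  obtain ⟨Q, hQP, hsep, hnet⟩ := exists_separated_net (2 * R') (by linarith) (S'.image p)
  have hQΓ : ∀ q ∈ Q, q ∈ Γ := by
    intro q hq
    obtain ⟨t, ht, rfl⟩ := Finset.mem_image.mp (hQP hq)
    exact (hp t ht).2
  have hupper : S'.card ≤ Q.card * tK T'.tiles := by
    have hsub : S' ⊆ Q.biUnion fun q =>
        S'.filter fun t => (t ∩ Metric.closedBall q (2 * R')).Nonempty := by
      intro t ht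
      obtain ⟨q, hq, hd⟩ := hnet (p t) (Finset.mem_image_of_mem p ht)
      exact Finset.mem_biUnion.mpr ⟨q, hq, Finset.mem_filter.mpr ⟨ht, p t, (hp t ht).1, hd⟩⟩
    refine (Finset.card_le_card hsub).trans (Finset.card_biUnion_le_card_mul _ _ _ ?_)
    intro q _
    exact card_le_tK T' hT' q _ (fun t ht => ((hS' t).mp (Finset.mem_filter.mp ht).1).1)
      (fun t ht => (Finset.mem_filter.mp ht).2)
  have hfar : ∀ q : Plane, ∃ z ∈ Γ, R' - R ≤ dist z q := by
    intro q
    by_contra! h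
    have := card_le_tK T' hT' q S' (fun t ht => ((hS' t).mp ht).1) (fun t ht =>
      ⟨p t, (hp t ht).1, Metric.mem_closedBall.mpr (by
        have := h (p t) (hp t ht).2
        linarith)⟩)
    omega
  -- the tiles of `T` that meet `Γ` within distance `R' - R` of `q`
  let N : Plane → Finset (Set Plane) := fun q =>
    S.filter fun t => ∃ y ∈ t, y ∈ Γ ∧ dist y q ≤ R' - R
  have hN : ∀ q ∈ Q, R' - R ≤ (N q).card * (2 * R) := by
    intro q hq
    obtain ⟨z, hz, hzq⟩ := hfar q
    refine radial_count T hT hΓ.isPreconnected (hQΓ q hq) hz hzq (N q)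
      (fun t ht => ((hS t).mp (Finset.mem_filter.mp ht).1).1) ?_
    intro y hy hyq
    obtain ⟨t, ht, hyt⟩ := Set.mem_sUnion.mp (T.covers.symm ▸ Set.mem_univ y)
    exact ⟨t, Finset.mem_filter.mpr ⟨(hS t).mpr ⟨ht, y, hyt, hy⟩, y, hyt, hy, hyq⟩, hyt⟩
  have hdisj : (Q : Set Plane).PairwiseDisjoint N := by
    intro a ha b hb hab
    refine Finset.disjoint_left.mpr fun t hta htb => ?_
    obtain ⟨hts, y, hyt, -, hya⟩ := Finset.mem_filter.mp hta
    obtain ⟨-, w, hwt, -, hwb⟩ := Finset.mem_filter.mp htb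
    have h1 := hsep a ha b hb hab
    have h2 := T.dist_le hT ((hS t).mp hts).1 hyt hwt
    have h3 := dist_triangle4 a y w b
    rw [dist_comm a y] at h3
    linarith
  have hsum : ∑ q ∈ Q, (N q).card ≤ S.card := by
    rw [← Finset.card_biUnion hdisj]
    exact Finset.card_le_card (Finset.biUnion_subset.mpr fun q _ => Finset.filter_subset _ _)
  have hlower : (Q.card : ℝ) * (R' - R) ≤ S.card * (2 * R) := by
    calc (Q.card : ℝ) * (R' - R) = ∑ _q ∈ Q, (R' - R) := by rw [Finset.sum_const, nsmul_eq_mul]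
      _ ≤ ∑ q ∈ Q, ((N q).card : ℝ) * (2 * R) := Finset.sum_le_sum hN
      _ = ((∑ q ∈ Q, (N q).card : ℕ) : ℝ) * (2 * R) := by
        rw [← Finset.sum_mul]; push_cast; rfl
      _ ≤ S.card * (2 * R) := by gcongr
  rw [hLS', hLS] at hL ⊢
  rw [mul_div_assoc', div_mul_eq_mul_div, le_div_iff₀ hR'0]
  have h1 : (S'.card : ℝ) ≤ Q.card * tK T'.tiles := by exact_mod_cast hupper
  have h2 : (S'.card : ℝ) ≤ S.card := by exact_mod_cast hL
  have h3 : (S'.card : ℝ) * (R' - R) ≤ Q.card * tK T'.tiles * (R' - R) :=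
    mul_le_mul_of_nonneg_right h1 (by linarith)
  have h4 : (tK T'.tiles : ℝ) * (Q.card * (R' - R)) ≤ tK T'.tiles * (S.card * (2 * R)) :=
    mul_le_mul_of_nonneg_left hlower (by positivity)
  have h5 : (S'.card : ℝ) * R ≤ S.card * R := mul_le_mul_of_nonneg_right h2 hR0
  nlinarith
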